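/- arXiv:2203.01258 — 2 statements merged into one kernel-verified Lean document; each statement's English description precedes it below -/
import Mathlib

section
/- Let k be an infinite field of characteristic zero or of characteristic p > k+1, and let B be a graded Artinian Gorenstein algebra with almost constant Hilbert function T(B) = (1, s^k, 1) where the Sperner number s is at most 3, or more generally with k ≥ s + 1. Then B has the strong Lefschetz property. -/
/- Common background: standard graded Artinian (Gorenstein) quotients of a
polynomial ring, their graded pieces, Hilbert function, socle degree,
Lefschetz-type conditions, and Macaulay contraction duality. -/

noncomputable section
open MvPolynomial
open scoped Classical

variable {K : Type*} [Field K] {n : ℕ}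

/-- The degree-`i` graded component of `R/I`: the image in the quotient of the
homogeneous polynomials of degree `i`. -/
def gradedPiece (I : Ideal (MvPolynomial (Fin n) K)) (i : ℕ) :
    Submodule K (MvPolynomial (Fin n) K ⧸ I) :=
  (homogeneousSubmodule (Fin n) K i).map (Ideal.Quotient.mkₐ K I).toLinearMap

/-- The Hilbert function of `R/I`. -/
def hilbFn (I : Ideal (MvPolynomial (Fin n) K)) (i : ℕ) : ℕ :=
  Module.finrank K (gradedPiece I i)

/-- `I` is a homogeneous ideal. -/
def IsHomogIdeal (I : Ideal (MvPolynomial (Fin n) K)) : Prop :=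
  ∀ p ∈ I, ∀ i, homogeneousComponent i p ∈ I

/-- The socle of `R/I`: elements killed by every variable. -/
def socleSub (I : Ideal (MvPolynomial (Fin n) K)) :
    Submodule K (MvPolynomial (Fin n) K ⧸ I) :=
  ⨅ v : Fin n, LinearMap.ker (LinearMap.mulLeft K (Ideal.Quotient.mk I (X v)))

/-- `R/I` is a standard graded Artinian Gorenstein algebra. -/
def IsAG (I : Ideal (MvPolynomial (Fin n) K)) : Prop :=
  IsHomogIdeal I ∧ I ≠ ⊤ ∧ FiniteDimensional K (MvPolynomial (Fin n) K ⧸ I) ∧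
    Module.finrank K (socleSub I) = 1

/-- The socle degree: the top degree with nonzero component. -/
def socDeg (I : Ideal (MvPolynomial (Fin n) K)) : ℕ :=
  sSup {i | hilbFn I i ≠ 0}

/-- Multiplication by `ℓ ^ d` maps `A_u` bijectively onto `A_v`. -/
def PowMulBij (I : Ideal (MvPolynomial (Fin n) K)) (ℓ : MvPolynomial (Fin n) K ⧸ I)
    (d u v : ℕ) : Prop :=
  (∀ a ∈ gradedPiece I u, ℓ ^ d * a = 0 → a = 0) ∧
  (∀ b ∈ gradedPiece I v, ∃ a ∈ gradedPiece I u, ℓ ^ d * a = b)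

/-- `(A, ℓ)` is a strong Lefschetz pair: `ℓ^(j-2i) : A_i → A_(j-i)` is bijective
for all `0 ≤ i ≤ ⌊j/2⌋`, `j` the socle degree. -/
def SLPair (I : Ideal (MvPolynomial (Fin n) K)) (ℓ : MvPolynomial (Fin n) K ⧸ I) : Prop :=
  ∀ i, 2 * i ≤ socDeg I → PowMulBij I ℓ (socDeg I - 2 * i) i (socDeg I - i)

/-- `A = R/I` has the strong Lefschetz property. -/
def StrongLefschetz (I : Ideal (MvPolynomial (Fin n) K)) : Prop :=
  ∃ ℓ ∈ gradedPiece I 1, SLPair I ℓ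

/-- Contraction of `F` by the monomial `x^d`. -/
def contractMon (d : Fin n →₀ ℕ) (F : MvPolynomial (Fin n) K) : MvPolynomial (Fin n) K :=
  ∑ e ∈ F.support, if d ≤ e then monomial (e - d) (coeff e F) else 0

/-- Contraction action of a polynomial `p` on `F` (Macaulay duality pairing). -/
def contract (p F : MvPolynomial (Fin n) K) : MvPolynomial (Fin n) K :=
  ∑ d ∈ p.support, coeff d p • contractMon d F

/-!
Write `V = B₁`, so that `Bᵢ = V ^ i`, and let `ℓ ∈ V` be such that multiplication by `ℓ` on a given
space has maximal rank. Since the rank drops only finitely often along a pencil, a vector lying in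
`(ℓ + ty)U` for almost all `t` already lies in `ℓU`; this replaces generic linear forms throughout.

The point is that some element of `V` multiplies injectively on `V`. If `s ≤ m`, take `ℓ` of maximal
rank on `U = V ^ (m - 1)` and `y ∈ V`: the `m + 1` monomials of degree `m` in `ℓ` and `y` are
linearly dependent. Modulo `(ℓ + ty)U` the relation reads `p(-t) y ^ m ≡ 0` with `p ≠ 0`, whence
`y ^ m ∈ ℓU`. As `V ^ m` is spanned by `m`-th powers, `V ^ m = ℓU`, and an element of `V` killed by
`ℓ` is killed by `V ^ m`, hence zero by Gorenstein duality. The remaining Hilbert function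
`(1, 3, 3, 1)` is treated by hand.

Now let `ℓ` have maximal rank on `V`. Then `ℓV = V ^ 2` as `dim V ^ 2 = dim V`, so
`ℓ ^ e V ^ i = V ^ (i + e)` for `i ≥ 1`. Choosing `ℓ` with `ℓ ^ (m + 1) ≠ 0` as well handles
`i = 0`.
-/

open Module
open scoped Pointwise Nat Polynomial

section Pencils

variable {E W : Type*} [AddCommGroup E] [Module K E] [AddCommGroup W] [Module K W]

theorem finite_setOf_not_injective_one_add_smul [FiniteDimensional K E] (f : End K E) :
    {t : K | ¬ Function.Injective (1 + t • f : End K E)}.Finite := by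
  refine (f.finite_hasEigenvalue.image fun μ => -μ⁻¹).subset fun t ht => ?_
  obtain ⟨x, hx, hx0⟩ : ∃ x, x + t • f x = 0 ∧ x ≠ 0 := by
    simpa [injective_iff_map_eq_zero] using ht
  have ht0 : t ≠ 0 := by
    rintro rfl
    exact hx0 (by simpa using hx)
  refine ⟨-t⁻¹, End.hasEigenvalue_of_hasEigenvector (x := x) ⟨?_, hx0⟩, by simp⟩
  rw [End.mem_eigenspace_iff, neg_smul, eq_neg_iff_add_eq_zero, ← smul_eq_zero_iff_right ht0,
    smul_add, smul_inv_smul₀ ht0, add_comm, hx]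

/-- Compressing `S + t • T` to `range S` gives a pencil of the form `1 + t • f`. -/
theorem finite_setOf_finrank_range_add_smul_lt [FiniteDimensional K E] (S T : E →ₗ[K] W) :
    {t : K | finrank K (LinearMap.range (S + t • T)) < finrank K (LinearMap.range S)}.Finite := by
  obtain ⟨c, hc⟩ := S.rangeRestrict.exists_rightInverse_of_surjective S.range_rangeRestrict
  obtain ⟨π, hπ⟩ := (LinearMap.range S).subtype.exists_leftInverse_of_injective
    (LinearMap.range S).ker_subtype
  refine (finite_setOf_not_injective_one_add_smul (π ∘ₗ T ∘ₗ c)).subset fun t ht hinj => ?_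
  have hcompress : π ∘ₗ (S + t • T) ∘ₗ c = 1 + t • (π ∘ₗ T ∘ₗ c) := by
    have hSc : S ∘ₗ c = (LinearMap.range S).subtype :=
      LinearMap.ext fun x => congrArg Subtype.val (LinearMap.congr_fun hc x)
    rw [LinearMap.add_comp, LinearMap.comp_add, hSc, hπ, LinearMap.smul_comp, LinearMap.comp_smul]
    rfl
  have hinj' : Function.Injective ((S + t • T) ∘ₗ c) := by
    refine Function.Injective.of_comp (f := π) ?_
    rwa [← LinearMap.coe_comp, hcompress]
  refine not_le.2 (Set.mem_ofPred_eq ▸ ht) ?_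
  rw [← LinearMap.finrank_range_of_inj hinj']
  exact Submodule.finrank_mono (LinearMap.range_comp_le_range _ _)

/-- Otherwise adjoining `w` to the range raises the rank of `S`, and hence that of almost every
member of the pencil. -/
theorem mem_range_of_finite_setOf_notMem_range [Infinite K] [FiniteDimensional K E]
    {S T : E →ₗ[K] W} {w : W}
    (hmax : ∀ t : K, finrank K (LinearMap.range (S + t • T)) ≤ finrank K (LinearMap.range S))
    (hw : {t : K | w ∉ LinearMap.range (S + t • T)}.Finite) : w ∈ LinearMap.range S := by
  by_contra hwS
  let S' : E × K →ₗ[K] W := S.coprod (LinearMap.toSpanSingleton K W w)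
  have hlt : finrank K (LinearMap.range S) < finrank K (LinearMap.range S') := by
    rw [LinearMap.range_coprod, LinearMap.range_toSpanSingleton]
    refine Submodule.finrank_lt_finrank_of_lt (left_lt_sup.2 fun h => hwS ?_)
    exact h (Submodule.mem_span_singleton_self w)
  obtain ⟨t, ht⟩ :=
    (hw.union (finite_setOf_finrank_range_add_smul_lt S' (T.coprod 0))).infinite_compl.nonempty
  simp only [Set.mem_compl_iff, Set.mem_union, Set.mem_ofPred_eq, not_or, not_not, not_lt] at ht
  obtain ⟨hwt, hrank⟩ := ht
  have hle : LinearMap.range (S' + t • T.coprod 0) ≤ LinearMap.range (S + t • T) := by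
    rintro _ ⟨⟨x, c⟩, rfl⟩
    have hsplit : (S' + t • T.coprod (0 : K →ₗ[K] W)) (x, c) = (S + t • T) x + c • w := by
      simp [S', add_right_comm]
    rw [hsplit]
    exact Submodule.add_mem _ ⟨x, rfl⟩ (Submodule.smul_mem _ _ hwt)
  exact absurd (hrank.trans ((Submodule.finrank_mono hle).trans (hmax t))) (not_le.2 hlt)

theorem finite_setOf_sum_pow_smul_mem {P : Submodule K W} {N k : ℕ} {c : ℕ → W} (hk : k < N)
    (hc : c k ∉ P) : {t : K | ∑ i ∈ Finset.range N, t ^ i • c i ∈ P}.Finite := by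
  obtain ⟨f, hf, hP⟩ := Submodule.exists_le_ker_of_notMem hc
  let p : K[X] := ∑ i ∈ Finset.range N, Polynomial.C (f (c i)) * Polynomial.X ^ i
  have hp : p ≠ 0 := by
    have hcoeff : p.coeff k = f (c k) := by simp [p, Polynomial.coeff_X_pow, hk]
    intro h
    exact hf (by rw [← hcoeff, h, Polynomial.coeff_zero])
  refine (Polynomial.finite_setOfPred_isRoot hp).subset fun t ht => ?_
  have hft : ∑ i ∈ Finset.range N, t ^ i * f (c i) = 0 := by
    simpa only [LinearMap.mem_ker, map_sum, map_smul, smul_eq_mul] using hP ht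
  simpa only [Set.mem_ofPred_eq, Polynomial.IsRoot, p, Polynomial.eval_finsetSum,
    Polynomial.eval_mul, Polynomial.eval_C, Polynomial.eval_pow, Polynomial.eval_X, mul_comm]
    using hft

theorem exists_ne_zero_sum_coeff_smul_eq_zero {P : Submodule K W} [FiniteDimensional K P] {N : ℕ}
    (hP : finrank K P ≤ N) {v : ℕ → W} (hv : ∀ i ≤ N, v i ∈ P) :
    ∃ p : K[X], p ≠ 0 ∧ p.natDegree ≤ N ∧ ∑ i ∈ Finset.range (N + 1), p.coeff i • v i = 0 := by
  have hdep : ¬ LinearIndependent K fun i : Fin (N + 1) => (⟨v i, hv i (by lia)⟩ : P) := fun h => by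
    simpa using h.fintype_card_le_finrank.trans hP
  obtain ⟨g, hg, i₀, hi₀⟩ := Fintype.not_linearIndependent_iff.1 hdep
  let p : K[X] := ∑ i : Fin (N + 1), Polynomial.C (g i) * Polynomial.X ^ (i : ℕ)
  have hcoeff : ∀ i : Fin (N + 1), p.coeff i = g i := fun i => by
    simp [p, Polynomial.coeff_X_pow, Fin.val_inj]
  refine ⟨p, fun h => hi₀ (by rw [← hcoeff, h, Polynomial.coeff_zero]), ?_, ?_⟩
  · refine Polynomial.natDegree_sum_le_of_forall_le _ _ fun i _ => ?_
    exact (Polynomial.natDegree_C_mul_X_pow_le _ _).trans (by lia)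
  · rw [Finset.sum_range]
    simpa [hcoeff] using congrArg Subtype.val hg

end Pencils

section Powers

variable {A : Type*} [CommRing A] [Algebra K A]

theorem add_smul_pow (y z : A) (t : K) (d : ℕ) :
    (y + t • z) ^ d =
      ∑ k ∈ Finset.range (d + 1), t ^ k • ((d.choose k : K) • (z ^ k * y ^ (d - k))) := by
  rw [add_comm, add_pow]
  refine Finset.sum_congr rfl fun k _ => ?_
  rw [smul_pow, Nat.cast_smul_eq_nsmul, nsmul_eq_mul, smul_mul_assoc, smul_mul_assoc,
    mul_comm _ (d.choose k : A)]

/-- Polarization: `(d + 1) z y ^ d` is a coefficient of the curve `t ↦ (y + tz) ^ (d + 1)`. -/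
theorem mul_pow_mem_span_image_pow [Infinite K] {V : Submodule K A} {y z : A} (hy : y ∈ V)
    (hz : z ∈ V) {d : ℕ} (hd : ((d + 1 : ℕ) : K) ≠ 0) :
    z * y ^ d ∈ Submodule.span K ((· ^ (d + 1)) '' (V : Set A)) := by
  by_contra hzy
  let c : ℕ → A := fun k => ((d + 1).choose k : K) • (z ^ k * y ^ (d + 1 - k))
  have hc : c 1 ∉ Submodule.span K ((· ^ (d + 1)) '' (V : Set A)) := by
    rw [← Submodule.smul_mem_iff _ hd] at hzy
    simpa only [c, Nat.choose_one_right, pow_one, Nat.add_sub_cancel] using hzy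
  refine Set.infinite_univ ((finite_setOf_sum_pow_smul_mem (N := d + 2) (by lia) hc).subset
    fun t _ => ?_)
  rw [Set.mem_ofPred_eq, ← add_smul_pow]
  exact Submodule.subset_span ⟨_, V.add_mem hy (V.smul_mem t hz), rfl⟩

theorem pow_eq_span_image_pow [Infinite K] (V : Submodule K A) {d : ℕ} (hd : IsUnit (d ! : K)) :
    V ^ d = Submodule.span K ((· ^ d) '' (V : Set A)) := by
  refine le_antisymm ?_ (Submodule.span_le.2 ?_)
  · induction d with
    | zero =>
      rw [pow_zero, Submodule.one_le]
      exact Submodule.subset_span ⟨0, V.zero_mem, pow_zero 0⟩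
    | succ d ih =>
      rw [pow_succ', Submodule.mul_le]
      intro z hz x hx
      have hd' : IsUnit (d ! : K) := hd.natCast_factorial_of_le d.le_succ
      refine (Submodule.span_le (p := (Submodule.span K _).comap (LinearMap.mulLeft K z))).2 ?_
        (ih hd' hx)
      rintro _ ⟨y, hy, rfl⟩
      rw [Nat.factorial_succ, Nat.cast_mul] at hd
      exact mul_pow_mem_span_image_pow hy hz (isUnit_of_mul_isUnit_left hd).ne_zero
  · rintro _ ⟨y, hy, rfl⟩
    exact Submodule.pow_mem_pow V hy d

theorem exists_pow_notMem_of_not_pow_le [Infinite K] {V : Submodule K A} {d : ℕ}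
    (hd : IsUnit (d ! : K)) {P : Submodule K A} (hP : ¬ V ^ d ≤ P) : ∃ z ∈ V, z ^ d ∉ P := by
  rw [pow_eq_span_image_pow V hd, Submodule.span_le, Set.not_subset] at hP
  obtain ⟨_, ⟨z, hz, rfl⟩, hzP⟩ := hP
  exact ⟨z, hz, hzP⟩

theorem finite_setOf_add_smul_pow_eq_zero (y : A) {z : A} {d : ℕ} (hz : z ^ d ≠ 0) :
    {t : K | (y + t • z) ^ d = 0}.Finite := by
  simp only [add_smul_pow, ← Submodule.mem_bot K (M := A)]
  exact finite_setOf_sum_pow_smul_mem d.lt_succ_self (by simpa using hz)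

end Powers

section MaxRank

variable {A : Type*} [CommRing A] [Algebra K A] {V U : Submodule K A} {ℓ y : A}

theorem range_domRestrict_mulLeft (U : Submodule K A) (ℓ : A) :
    LinearMap.range ((LinearMap.mulLeft K ℓ).domRestrict U) = ℓ • U :=
  LinearMap.range_domRestrict _ _

theorem finrank_smul_of_forall_mul_eq_zero (h : ∀ a ∈ U, ℓ * a = 0 → a = 0) :
    finrank K ↥(ℓ • U) = finrank K U := by
  have hinj : Function.Injective ((LinearMap.mulLeft K ℓ).domRestrict U) := by
    rw [LinearMap.injective_domRestrict_iff, Submodule.disjoint_def]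
    exact h
  rw [← LinearMap.finrank_range_of_inj hinj, range_domRestrict_mulLeft]

theorem range_domRestrict_mulLeft_add_smul (U : Submodule K A) (ℓ y : A) (t : K) :
    LinearMap.range ((LinearMap.mulLeft K ℓ).domRestrict U +
      t • (LinearMap.mulLeft K y).domRestrict U) = (ℓ + t • y) • U := by
  ext w
  simp [Submodule.mem_smul_pointwise_iff_exists, add_mul]

/-- `ℓ` is an element of `V` whose multiplication map on `U` has the largest rank among all elements
of `V`. It plays the role of a general element of `V`. -/
structure HasMaxRank (V U : Submodule K A) (ℓ : A) : Prop where
  mem : ℓ ∈ V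
  finrank_smul_le : ∀ ℓ' ∈ V, finrank K ↥(ℓ' • U) ≤ finrank K ↥(ℓ • U)

theorem exists_hasMaxRank (V U : Submodule K A) [FiniteDimensional K U] :
    ∃ ℓ, HasMaxRank V U ℓ := by
  have hfin : ((fun ℓ : A => finrank K ↥(ℓ • U)) '' V).Finite :=
    (Set.finite_Iic (finrank K U)).subset <| by
      rintro _ ⟨ℓ, -, rfl⟩
      exact Submodule.finrank_map_le _ _
  obtain ⟨ℓ, hℓ, hmax⟩ := Set.Finite.exists_maximalFor' _ _ hfin ⟨0, V.zero_mem⟩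
  exact ⟨ℓ, hℓ, fun ℓ' hℓ' => (le_total _ _).elim id (hmax hℓ')⟩

namespace HasMaxRank

theorem of_finrank_smul_le {ℓ' : A} (h : HasMaxRank V U ℓ) (hℓ' : ℓ' ∈ V)
    (hle : finrank K ↥(ℓ • U) ≤ finrank K ↥(ℓ' • U)) : HasMaxRank V U ℓ' :=
  ⟨hℓ', fun x hx => (h.finrank_smul_le x hx).trans hle⟩

theorem mem_smul_of_finite [Infinite K] [FiniteDimensional K U] (h : HasMaxRank V U ℓ)
    (hy : y ∈ V) {w : A} (hw : {t : K | w ∉ (ℓ + t • y) • U}.Finite) : w ∈ ℓ • U := by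
  rw [← range_domRestrict_mulLeft]
  refine mem_range_of_finite_setOf_notMem_range
    (T := (LinearMap.mulLeft K y).domRestrict U) (fun t => ?_) ?_
  · rw [range_domRestrict_mulLeft_add_smul, range_domRestrict_mulLeft]
    exact h.finrank_smul_le _ (V.add_mem h.mem (V.smul_mem t hy))
  · simpa only [range_domRestrict_mulLeft_add_smul] using hw

theorem exists_pow_ne_zero [Infinite K] (V U : Submodule K A) [FiniteDimensional K U] {d : ℕ}
    (hd : IsUnit (d ! : K)) (hV : V ^ d ≠ ⊥) : ∃ ℓ, HasMaxRank V U ℓ ∧ ℓ ^ d ≠ 0 := by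
  obtain ⟨ℓ, hℓ⟩ := exists_hasMaxRank V U
  obtain ⟨z, hz, hzd⟩ := exists_pow_notMem_of_not_pow_le hd (mt le_bot_iff.1 hV)
  rw [Submodule.mem_bot] at hzd
  have hrank := finite_setOf_finrank_range_add_smul_lt ((LinearMap.mulLeft K ℓ).domRestrict U)
    ((LinearMap.mulLeft K z).domRestrict U)
  obtain ⟨t, ht⟩ :=
    (hrank.union (finite_setOf_add_smul_pow_eq_zero ℓ hzd)).infinite_compl.nonempty
  simp only [Set.mem_compl_iff, Set.mem_union, Set.mem_ofPred_eq, not_or, not_lt] at ht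
  rw [range_domRestrict_mulLeft, range_domRestrict_mulLeft_add_smul] at ht
  exact ⟨ℓ + t • z, hℓ.of_finrank_smul_le (V.add_mem hℓ.mem (V.smul_mem t hz)) ht.1, ht.2⟩

/-- The tangent space to the variety of maps of rank at most `r` at a map of rank `r`: its elements
send the kernel into the range. -/
theorem mul_mem_smul_of_mul_eq_zero [Infinite K] [FiniteDimensional K U] (h : HasMaxRank V U ℓ)
    (hy : y ∈ V) {a : A} (ha : a ∈ U) (hℓa : ℓ * a = 0) : y * a ∈ ℓ • U := by
  refine h.mem_smul_of_finite hy ((Set.finite_singleton 0).subset fun t ht => ?_)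
  by_contra ht0
  refine ht ((Submodule.mem_smul_pointwise_iff_exists _ _ _).2 ⟨t⁻¹ • a, U.smul_mem _ ha, ?_⟩)
  rw [smul_eq_mul, mul_smul_comm, add_mul, hℓa, zero_add, smul_mul_assoc, inv_smul_smul₀ ht0]

end HasMaxRank

end MaxRank

section Green

variable {A : Type*} [CommRing A] [Algebra K A] {V : Submodule K A} {ℓ y : A}

instance finiteDimensional_pow (V : Submodule K A) [FiniteDimensional K V] (d : ℕ) :
    FiniteDimensional K ↥(V ^ d) :=
  Module.Finite.of_fg (((Submodule.fg_iff_finiteDimensional V).2 inferInstance).pow d)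

theorem pow_mul_pow_sub_smul_pow_mem (hℓ : ℓ ∈ V) (hy : y ∈ V) (t : K) {d i j : ℕ}
    (hij : i + j = d + 1) :
    ℓ ^ i * y ^ j - (-t) ^ i • y ^ (d + 1) ∈ (ℓ + t • y) • V ^ d := by
  induction i generalizing j with
  | zero =>
    obtain rfl : j = d + 1 := by lia
    simp
  | succ i ih =>
    have hstep : ℓ ^ (i + 1) * y ^ j - (-t) ^ (i + 1) • y ^ (d + 1) =
        (ℓ + t • y) • (ℓ ^ i * y ^ j) +
          (-t) • (ℓ ^ i * y ^ (j + 1) - (-t) ^ i • y ^ (d + 1)) := by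
      rw [smul_eq_mul]
      simp only [Algebra.smul_def, map_pow, map_neg]
      ring
    have hmem : ℓ ^ i * y ^ j ∈ V ^ d := by
      obtain rfl : d = i + j := by lia
      rw [pow_add]
      exact Submodule.mul_mem_mul (V.pow_mem_pow hℓ i) (V.pow_mem_pow hy j)
    rw [hstep]
    exact Submodule.add_mem _ (Submodule.smul_mem_pointwise_smul _ _ _ hmem)
      (Submodule.smul_mem _ _ (ih (by lia)))

theorem eval_neg_smul_pow_mem (hℓ : ℓ ∈ V) (hy : y ∈ V) (t : K) {d : ℕ} {p : K[X]}
    (hp : p.natDegree ≤ d + 1)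
    (hrel : ∑ i ∈ Finset.range (d + 2), p.coeff i • (ℓ ^ i * y ^ (d + 1 - i)) = 0) :
    p.eval (-t) • y ^ (d + 1) ∈ (ℓ + t • y) • V ^ d := by
  have hsum : p.eval (-t) • y ^ (d + 1) = -∑ i ∈ Finset.range (d + 2),
      p.coeff i • (ℓ ^ i * y ^ (d + 1 - i) - (-t) ^ i • y ^ (d + 1)) := by
    simp only [smul_sub, Finset.sum_sub_distrib, hrel, zero_sub, neg_neg, smul_smul,
      ← Finset.sum_smul]
    rw [← Polynomial.eval_eq_sum_range' (by lia)]
  rw [hsum]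
  refine Submodule.neg_mem _ (Submodule.sum_mem _ fun i hi => Submodule.smul_mem _ _ ?_)
  exact pow_mul_pow_sub_smul_pow_mem hℓ hy t (by grind)

/-- The case of Green's hyperplane restriction theorem in which the restriction to a general
hyperplane vanishes. -/
theorem HasMaxRank.pow_succ_le_smul [Infinite K] [FiniteDimensional K V] {d : ℕ}
    (h : HasMaxRank V (V ^ d) ℓ) (hd : IsUnit ((d + 1)! : K))
    (hV : finrank K ↥(V ^ (d + 1)) ≤ d + 1) : V ^ (d + 1) ≤ ℓ • V ^ d := by
  rw [pow_eq_span_image_pow V hd, Submodule.span_le]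
  rintro _ ⟨y, hy, rfl⟩
  have hmonomial : ∀ i ≤ d + 1, ℓ ^ i * y ^ (d + 1 - i) ∈ V ^ (d + 1) := fun i hi => by
    rw [← Nat.add_sub_of_le hi, pow_add, Nat.add_sub_cancel_left]
    exact Submodule.mul_mem_mul (V.pow_mem_pow h.mem _) (V.pow_mem_pow hy _)
  obtain ⟨p, hp, hdeg, hrel⟩ := exists_ne_zero_sum_coeff_smul_eq_zero hV hmonomial
  have hroots : {t : K | p.IsRoot (-t)}.Finite :=
    (Polynomial.finite_setOfPred_isRoot hp).preimage neg_injective.injOn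
  refine h.mem_smul_of_finite hy (hroots.subset fun t ht => ?_)
  by_contra hroot
  exact ht ((Submodule.smul_mem_iff _ hroot).1 (eval_neg_smul_pow_mem h.mem hy t hdeg hrel))

end Green

section Socle

variable {A : Type*} [CommRing A] [Algebra K A]

/-- No nonzero element of `V ^ i` with `i < N` is killed by `V`: if `V` is the degree-one part of a
standard graded algebra, the socle of the algebra lives in degrees at least `N`. -/
def NoSocleBelow (V : Submodule K A) (N : ℕ) : Prop :=
  ∀ i < N, ∀ a ∈ V ^ i, (∀ v ∈ V, v * a = 0) → a = 0

variable {V : Submodule K A} {N : ℕ}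

theorem NoSocleBelow.eq_zero_of_forall_mul_eq_zero (hV : NoSocleBelow V N) {i e : ℕ}
    (hie : i + e ≤ N) {a : A} (ha : a ∈ V ^ i) (h : ∀ b ∈ V ^ e, b * a = 0) : a = 0 := by
  induction e generalizing i a with
  | zero => simpa using h 1 (by rw [pow_zero]; exact Submodule.one_le.1 le_rfl)
  | succ e ih =>
    refine hV i (by lia) a ha fun v hv => ?_
    refine ih (i := i + 1) (by lia) (pow_succ' V i ▸ Submodule.mul_mem_mul hv ha) fun b hb => ?_
    rw [← mul_assoc]
    exact h _ (pow_succ V e ▸ Submodule.mul_mem_mul hb hv)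

theorem exists_forall_eq_zero_of_finrank_pow_le [Infinite K] [FiniteDimensional K V] {d : ℕ}
    (hd : IsUnit ((d + 1)! : K)) (hsoc : NoSocleBelow V (d + 2))
    (hV : finrank K ↥(V ^ (d + 1)) ≤ d + 1) : ∃ ℓ ∈ V, ∀ a ∈ V, ℓ * a = 0 → a = 0 := by
  obtain ⟨ℓ, hℓ⟩ := exists_hasMaxRank V (V ^ d)
  refine ⟨ℓ, hℓ.mem, fun a ha hℓa => ?_⟩
  refine hsoc.eq_zero_of_forall_mul_eq_zero (i := 1) (e := d + 1) (by lia) (by rwa [pow_one])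
    fun b hb => ?_
  obtain ⟨u, -, rfl⟩ :=
    (Submodule.mem_smul_pointwise_iff_exists _ _ _).1 (hℓ.pow_succ_le_smul hd hV hb)
  rw [smul_eq_mul, mul_right_comm, hℓa, zero_mul]

end Socle

section Ternary

variable {A : Type*} [CommRing A] [Algebra K A] {V : Submodule K A} {a ℓ z : A}

theorem linearIndependent_of_mul_self_eq_zero (ha : a ≠ 0) (haa : a * a = 0) (hℓa : ℓ * a = 0)
    (hℓ : ℓ ^ 2 ≠ 0) (hza : z * a ≠ 0) : LinearIndependent K ![a, ℓ, z] := by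
  rw [Fintype.linearIndependent_iff]
  intro g h
  simp only [Fin.sum_univ_three, Matrix.cons_val, Algebra.smul_def] at h
  have hg₂ : g 2 = 0 := by
    refine (smul_eq_zero_iff_left hza).1 ?_
    rw [Algebra.smul_def]
    linear_combination a * h - algebraMap K A (g 0) * haa - algebraMap K A (g 1) * hℓa
  rw [hg₂, map_zero, zero_mul, add_zero] at h
  have hg₁ : g 1 = 0 := by
    refine (smul_eq_zero_iff_left hℓ).1 ?_
    rw [Algebra.smul_def]
    linear_combination ℓ * h - algebraMap K A (g 0) * hℓa
  rw [hg₁, map_zero, zero_mul, add_zero, ← Algebra.smul_def, smul_eq_zero_iff_left ha] at h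
  exact Fin.forall_fin_succ.2 ⟨h, Fin.forall_fin_two.2 ⟨hg₁, hg₂⟩⟩

theorem eq_zero_of_add_mul_eq_zero (haa : a * a = 0) (hℓa : ℓ * a = 0) (hza : z ^ 2 * a ≠ 0)
    (hℓz : ℓ ^ 2 * (ℓ + z) ≠ 0) {b : A} (hb : b ∈ Submodule.span K {a, ℓ, z})
    (h : (ℓ + z) * b = 0) : b = 0 := by
  obtain ⟨x, y, w, rfl⟩ := Submodule.mem_span_triple.1 hb
  have hw : w = 0 := by
    refine (smul_eq_zero_iff_left hza).1 ?_
    simp only [Algebra.smul_def] at h ⊢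
    linear_combination a * h - (algebraMap K A x * (ℓ + z) * haa) -
      (algebraMap K A y * (ℓ + z) + algebraMap K A w * z) * hℓa
  subst hw
  have hy : y = 0 := by
    refine (smul_eq_zero_iff_left hℓz).1 ?_
    simp only [Algebra.smul_def, map_zero] at h ⊢
    linear_combination ℓ * h - algebraMap K A x * (ℓ + z) * hℓa
  subst hy
  have hx : x = 0 := by
    refine (smul_eq_zero_iff_left hza).1 ?_
    simp only [Algebra.smul_def, map_zero] at h ⊢
    linear_combination z * h - algebraMap K A x * z * hℓa
  simp [hx]

theorem NoSocleBelow.mul_self_eq_zero [Infinite K] [FiniteDimensional K V]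
    (hsoc : NoSocleBelow V 3) (hℓ : HasMaxRank V V ℓ) (ha : a ∈ V) (hℓa : ℓ * a = 0) :
    a * a = 0 := by
  refine hsoc 2 (by lia) _ (pow_two V ▸ Submodule.mul_mem_mul ha ha) fun y hy => ?_
  obtain ⟨u, -, hu⟩ := (Submodule.mem_smul_pointwise_iff_exists _ _ _).1
    (hℓ.mul_mem_smul_of_mul_eq_zero hy ha hℓa)
  rw [smul_eq_mul] at hu
  linear_combination u * hℓa - a * hu

theorem NoSocleBelow.exists_sq_mul_ne_zero [Infinite K] (hsoc : NoSocleBelow V 3)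
    (hd : IsUnit (Nat.factorial 2 : K)) (ha : a ∈ V) (ha0 : a ≠ 0) (hℓ : ℓ ^ 3 ≠ 0) :
    ∃ z ∈ V, z ^ 2 * a ≠ 0 ∧ ℓ ^ 2 * (ℓ + z) ≠ 0 := by
  have hV2a : ¬ V ^ 2 ≤ LinearMap.ker (LinearMap.mulRight K a) := fun h =>
    ha0 (hsoc.eq_zero_of_forall_mul_eq_zero (i := 1) le_rfl (by rwa [pow_one]) h)
  obtain ⟨z, hz, hza⟩ := exists_pow_notMem_of_not_pow_le hd hV2a
  by_cases hℓz : ℓ ^ 2 * (ℓ + z) = 0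
  · refine ⟨-z, V.neg_mem hz, by rwa [neg_sq], fun hℓz' => hℓ ?_⟩
    have h2 : (2 : K) • ℓ ^ 3 = 0 := by
      rw [ofNat_smul_eq_nsmul, nsmul_eq_mul, Nat.cast_ofNat]
      linear_combination hℓz + hℓz'
    exact (smul_eq_zero_iff_right (by simpa using hd.ne_zero)).1 h2
  · exact ⟨z, hz, hza, hℓz⟩

/-- If `ℓ` of maximal rank kills `a ≠ 0`, then `ℓ + z` acts injectively for a suitable basis
`a, ℓ, z` of `V`. -/
theorem exists_forall_eq_zero_of_finrank_eq_three [Infinite K] (hd : IsUnit (Nat.factorial 3 : K))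
    (hV : finrank K V = 3) (htop : V ^ 3 ≠ ⊥) (hsoc : NoSocleBelow V 3) :
    ∃ ℓ ∈ V, ∀ a ∈ V, ℓ * a = 0 → a = 0 := by
  have : FiniteDimensional K V := FiniteDimensional.of_finrank_pos (by lia)
  obtain ⟨ℓ, hℓ, hℓ3⟩ := HasMaxRank.exists_pow_ne_zero V V hd htop
  by_contra! hker
  obtain ⟨a, ha, hℓa, ha0⟩ := hker ℓ hℓ.mem
  have haa : a * a = 0 := hsoc.mul_self_eq_zero hℓ ha hℓa
  obtain ⟨z, hz, hza, hℓz⟩ := hsoc.exists_sq_mul_ne_zero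
    (hd.natCast_factorial_of_le (by lia)) ha ha0 hℓ3
  have hli : LinearIndependent K ![a, ℓ, z] := by
    refine linearIndependent_of_mul_self_eq_zero ha0 haa hℓa (fun h => hℓ3 ?_) fun h => hza ?_
    · rw [pow_succ, h, zero_mul]
    · rw [pow_two, mul_assoc, h, mul_zero]
  have hspan : Submodule.span K {a, ℓ, z} = V := by
    refine Submodule.eq_of_le_of_finrank_eq ?_ ?_
    · rw [Submodule.span_le]
      rintro x (rfl | rfl | rfl)
      exacts [ha, hℓ.mem, hz]
    · have hrange : Set.range ![a, ℓ, z] = {a, ℓ, z} := by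
        simp only [Matrix.range_cons, Matrix.range_empty, Set.union_empty, Set.insert_eq]
      rw [← hrange, finrank_span_eq_card hli, hV, Fintype.card_fin]
  obtain ⟨b, hb, hzb, hb0⟩ := hker (ℓ + z) (V.add_mem hℓ.mem hz)
  exact hb0 (eq_zero_of_add_mul_eq_zero haa hℓa hza hℓz (hspan.symm ▸ hb) hzb)

end Ternary

section Lefschetz

variable {A : Type*} [CommRing A] [Algebra K A] {V : Submodule K A} {ℓ : A}

theorem exists_forall_eq_zero_of_mul_eq_zero [Infinite K] [FiniteDimensional K V] {s m : ℕ}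
    (hm : 2 ≤ m) (hfact : IsUnit ((m + 1)! : K))
    (hrank : ∀ i, 1 ≤ i → i ≤ m → finrank K ↥(V ^ i) = s) (htop : V ^ (m + 1) ≠ ⊥)
    (hsoc : NoSocleBelow V (m + 1)) (hs : s ≤ 3 ∨ s ≤ m) :
    ∃ ℓ ∈ V, ∀ a ∈ V, ℓ * a = 0 → a = 0 := by
  obtain hsm | ⟨rfl, rfl⟩ : s ≤ m ∨ m = 2 ∧ s = 3 := by lia
  · obtain ⟨d, rfl⟩ : ∃ d, m = d + 1 := ⟨m - 1, by lia⟩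
    exact exists_forall_eq_zero_of_finrank_pow_le (hfact.natCast_factorial_of_le (d + 1).le_succ)
      hsoc ((hrank _ (by lia) le_rfl).trans_le hsm)
  · have hV : finrank K V = 3 := by rw [← hrank 1 le_rfl (by lia), pow_one]
    exact exists_forall_eq_zero_of_finrank_eq_three hfact hV htop hsoc

theorem HasMaxRank.smul_eq_sq [FiniteDimensional K V] (hℓ : HasMaxRank V V ℓ)
    (hV : finrank K ↥(V ^ 2) = finrank K V) (hinj : ∃ ℓ' ∈ V, ∀ a ∈ V, ℓ' * a = 0 → a = 0) :
    ℓ • V = V ^ 2 := by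
  obtain ⟨ℓ', hℓ', hinj⟩ := hinj
  refine Submodule.eq_of_le_of_finrank_le ?_ ?_
  · rw [pow_two, ← Submodule.span_singleton_mul]
    exact mul_le_mul_left ((Submodule.span_singleton_le_iff_mem _ _).2 hℓ.mem) V
  · rw [hV, ← finrank_smul_of_forall_mul_eq_zero hinj]
    exact hℓ.finrank_smul_le ℓ' hℓ'

theorem pow_smul_pow_eq_of_smul_eq_sq (h : ℓ • V = V ^ 2) (e : ℕ) {i : ℕ} (hi : 1 ≤ i) :
    ℓ ^ e • V ^ i = V ^ (i + e) := by
  obtain ⟨i, rfl⟩ := Nat.exists_eq_add_of_le' hi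
  rw [← Submodule.span_singleton_mul] at h
  rw [← Submodule.span_singleton_mul, ← Set.singleton_pow, ← Submodule.span_pow]
  induction e with
  | zero => rw [pow_zero, one_mul, add_zero]
  | succ e ih =>
    rw [pow_succ', mul_assoc, ih, add_right_comm, pow_succ', ← mul_assoc, h, ← pow_add]
    ring_nf

theorem pow_smul_one_eq_pow {d : ℕ} (hℓ : ℓ ∈ V) (hne : ℓ ^ d ≠ 0) (hV : finrank K ↥(V ^ d) = 1) :
    ℓ ^ d • (1 : Submodule K A) = V ^ d := by
  have : FiniteDimensional K ↥(V ^ d) := FiniteDimensional.of_finrank_eq_succ hV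
  rw [Submodule.smul_one_eq_span]
  refine Submodule.eq_of_le_of_finrank_eq ?_ ((finrank_span_singleton hne).trans hV.symm)
  exact (Submodule.span_singleton_le_iff_mem _ _).2 (V.pow_mem_pow hℓ d)

theorem exists_forall_pow_smul_pow_eq [Infinite K] [FiniteDimensional K V] {s m : ℕ}
    (hfact : IsUnit ((m + 1)! : K)) (hrank : ∀ i, 1 ≤ i → i ≤ m → finrank K ↥(V ^ i) = s)
    (htop : finrank K ↥(V ^ (m + 1)) = 1) (hsoc : NoSocleBelow V (m + 1))
    (hcase : s ≤ 3 ∨ s ≤ m ∨ m ≤ 1) :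
    ∃ ℓ ∈ V, ∀ i, 2 * i ≤ m + 1 → ℓ ^ (m + 1 - 2 * i) • V ^ i = V ^ (m + 1 - i) := by
  have htop' : V ^ (m + 1) ≠ ⊥ := fun h => by
    rw [h, finrank_bot] at htop
    exact zero_ne_one htop
  obtain ⟨ℓ, hℓ, hpow⟩ := HasMaxRank.exists_pow_ne_zero V V hfact htop'
  refine ⟨ℓ, hℓ.mem, fun i hi => ?_⟩
  obtain rfl | hi₀ := Nat.eq_zero_or_pos i
  · simpa only [mul_zero, tsub_zero, pow_zero] using pow_smul_one_eq_pow hℓ.mem hpow htop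
  obtain hm | hm := lt_or_ge m 2
  · obtain ⟨rfl, rfl⟩ : m = 1 ∧ i = 1 := by lia
    simp
  · have hsq : ℓ • V = V ^ 2 := by
      refine hℓ.smul_eq_sq ?_
        (exists_forall_eq_zero_of_mul_eq_zero hm hfact hrank htop' hsoc (by lia))
      rw [hrank 2 (by lia) hm, ← hrank 1 le_rfl (by lia), pow_one]
    rw [pow_smul_pow_eq_of_smul_eq_sq hsq _ hi₀]
    congr 1
    lia

end Lefschetz

section Graded

variable {I : Ideal (MvPolynomial (Fin n) K)}

theorem gradedPiece_one_pow (I : Ideal (MvPolynomial (Fin n) K)) (i : ℕ) :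
    gradedPiece I 1 ^ i = gradedPiece I i := by
  rw [gradedPiece, gradedPiece, ← Submodule.map_pow, homogeneousSubmodule_one_pow]

theorem finrank_gradedPiece_one_pow (I : Ideal (MvPolynomial (Fin n) K)) (i : ℕ) :
    finrank K ↥(gradedPiece I 1 ^ i) = hilbFn I i := by
  rw [gradedPiece_one_pow, hilbFn]

theorem mk_X_mem_gradedPiece_one (v : Fin n) : Ideal.Quotient.mk I (X v) ∈ gradedPiece I 1 :=
  ⟨X v, isHomogeneous_X K v, rfl⟩

theorem mem_socleSub_of_forall_mul_eq_zero {a : MvPolynomial (Fin n) K ⧸ I}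
    (h : ∀ v ∈ gradedPiece I 1, v * a = 0) : a ∈ socleSub I := by
  simp only [socleSub, Submodule.mem_iInf, LinearMap.mem_ker, LinearMap.mulLeft_apply]
  exact fun v => h _ (mk_X_mem_gradedPiece_one v)

theorem IsHomogIdeal.disjoint_gradedPiece (hI : IsHomogIdeal I) {i j : ℕ} (hij : i ≠ j) :
    Disjoint (gradedPiece I i) (gradedPiece I j) := by
  rw [Submodule.disjoint_def]
  rintro _ ⟨p, hp, rfl⟩ ⟨q, hq, hqp⟩
  have hcomponent := hI _ (Ideal.Quotient.eq.1 hqp) i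
  rw [map_sub, homogeneousComponent_of_mem hq, homogeneousComponent_of_mem hp, if_neg hij,
    if_pos rfl, zero_sub, neg_mem_iff] at hcomponent
  exact Ideal.Quotient.eq_zero_iff_mem.2 hcomponent

theorem IsAG.gradedPiece_eq_socleSub (hI : IsAG I) {N : ℕ} (hN : hilbFn I N ≠ 0)
    (hN' : hilbFn I (N + 1) = 0) : gradedPiece I N = socleSub I := by
  obtain ⟨-, -, _, hsocle⟩ := hI
  refine Submodule.eq_of_le_of_finrank_le (fun w hw => ?_) ?_
  · refine mem_socleSub_of_forall_mul_eq_zero fun v hv => ?_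
    have hvw := Submodule.mul_mem_mul hv hw
    rwa [← gradedPiece_one_pow I N, ← pow_succ', gradedPiece_one_pow,
      Submodule.finrank_eq_zero.1 hN', Submodule.mem_bot] at hvw
  · rw [hsocle]
    exact Nat.one_le_iff_ne_zero.2 hN

theorem IsAG.noSocleBelow (hI : IsAG I) {N : ℕ} (hN : hilbFn I N ≠ 0)
    (hN' : hilbFn I (N + 1) = 0) : NoSocleBelow (gradedPiece I 1) N := by
  intro i hi a ha h
  rw [gradedPiece_one_pow] at ha
  refine Submodule.disjoint_def.1 (hI.1.disjoint_gradedPiece hi.ne) a ha ?_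
  rw [hI.gradedPiece_eq_socleSub hN hN']
  exact mem_socleSub_of_forall_mul_eq_zero h

theorem hilbFn_zero (hI : I ≠ ⊤) : hilbFn I 0 = 1 := by
  have : Nontrivial (MvPolynomial (Fin n) K ⧸ I) := Ideal.Quotient.nontrivial_iff.2 hI
  rw [hilbFn, gradedPiece, homogeneousSubmodule_zero, Submodule.map_one, Submodule.one_eq_span]
  exact finrank_span_singleton one_ne_zero

theorem socDeg_eq {N : ℕ} (hN : hilbFn I N ≠ 0) (hvan : ∀ i, N < i → hilbFn I i = 0) :
    socDeg I = N :=
  IsGreatest.csSup_eq ⟨hN, fun i hi => not_lt.1 (mt (hvan i) hi)⟩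

theorem powMulBij_of_smul_eq [FiniteDimensional K (MvPolynomial (Fin n) K ⧸ I)]
    {ℓ : MvPolynomial (Fin n) K ⧸ I} {d u v : ℕ} (h : ℓ ^ d • gradedPiece I u = gradedPiece I v)
    (huv : hilbFn I u = hilbFn I v) : PowMulBij I ℓ d u v := by
  refine ⟨fun a ha hℓa => ?_, fun b hb => ?_⟩
  · have hle : finrank K (gradedPiece I u) ≤ finrank K ↥(ℓ ^ d • gradedPiece I u) := by
      rw [h]
      exact huv.le
    exact Submodule.disjoint_def.1
      (Submodule.disjoint_ker_of_finrank_le (LinearMap.mulLeft K (ℓ ^ d)) hle) a ha hℓa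
  · rw [← h] at hb
    exact (Submodule.mem_smul_pointwise_iff_exists _ _ _).1 hb

end Graded

theorem isUnit_natCast_factorial {d : ℕ} (h : CharZero K ∨ d < ringChar K) :
    IsUnit (d ! : K) := by
  obtain h | h := h
  · exact (Nat.cast_ne_zero.2 d.factorial_ne_zero).isUnit
  · have : Fact (ringChar K).Prime :=
      ⟨(CharP.char_is_prime_or_zero K (ringChar K)).resolve_right (by lia)⟩
    exact (IsUnit.natCast_factorial_iff_of_charP (ringChar K)).2 h

theorem stmt9_general [Infinite K] (I : Ideal (MvPolynomial (Fin n) K)) (s m : ℕ)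
    (hfact : IsUnit ((m + 1)! : K)) (hAG : IsAG I)
    (hmid : ∀ i, 1 ≤ i → i ≤ m → hilbFn I i = s) (htop : hilbFn I (m + 1) = 1)
    (hvan : ∀ i, m + 1 < i → hilbFn I i = 0) (hcase : s ≤ 3 ∨ s ≤ m ∨ m ≤ 1) :
    StrongLefschetz I := by
  have : FiniteDimensional K (MvPolynomial (Fin n) K ⧸ I) := hAG.2.2.1
  have htop₀ : hilbFn I (m + 1) ≠ 0 := by lia
  obtain ⟨ℓ, hℓ, hsmul⟩ := exists_forall_pow_smul_pow_eq (V := gradedPiece I 1) hfact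
    (by simpa only [finrank_gradedPiece_one_pow] using hmid)
    ((finrank_gradedPiece_one_pow I _).trans htop)
    (hAG.noSocleBelow htop₀ (hvan _ (by lia))) hcase
  refine ⟨ℓ, hℓ, fun i hi => ?_⟩
  rw [socDeg_eq htop₀ hvan] at hi ⊢
  refine powMulBij_of_smul_eq (by simpa only [gradedPiece_one_pow] using hsmul i hi) ?_
  obtain rfl | hi₀ := Nat.eq_zero_or_pos i
  · rw [hilbFn_zero hAG.2.1, tsub_zero, htop]
  · rw [hmid i hi₀ (by lia), hmid (m + 1 - i) (by lia) (by lia)]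

/-- let `K` have characteristic zero or be infinite of characteristic
`p > m + 1`, and let `B = R/I` be a graded Artinian Gorenstein algebra with almost
constant Hilbert function `(1, s^m, 1)` (socle degree `j = m + 1`), where the
Sperner number satisfies `s ≤ 3`, or more generally `m ≥ s + 1`. Then `B` has the
strong Lefschetz property. -/
theorem stmt9 (I : Ideal (MvPolynomial (Fin n) K)) (s m : ℕ) (hm : 1 ≤ m)
    (hchar : CharZero K ∨ (Infinite K ∧ m + 1 < ringChar K))
    (hAG : IsAG I)
    (h0 : hilbFn I 0 = 1) (hmid : ∀ i, 1 ≤ i → i ≤ m → hilbFn I i = s)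
    (htop : hilbFn I (m + 1) = 1) (hvan : ∀ i, m + 1 < i → hilbFn I i = 0)
    (hcase : s ≤ 3 ∨ s + 1 ≤ m) :
    StrongLefschetz I := by
  have : Infinite K := hchar.elim (fun _ => inferInstance) And.left
  exact stmt9_general I s m (isUnit_natCast_factorial (hchar.imp_right And.right)) hAG hmid htop
    hvan (by lia)
end
end

section
/- Let A be an Artinian Gorenstein algebra of socle degree j ≥ 6 with Hilbert function (1,3,5,6^{j−5},5,3,1), written A = k[x,y,z]/I with I_2 = ⟨f⟩ and I_3 = ⟨xf, yf, zf, g⟩, and suppose f, g form a regular sequence. Then I is a complete intersection: I = (f, g, h) with deg h = j − 2. -/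
/- Common background: standard graded Artinian (Gorenstein) quotients of a
polynomial ring, their graded pieces, Hilbert function, socle degree,
Lefschetz-type conditions, and Macaulay contraction duality. -/

noncomputable section
open MvPolynomial
open scoped Classical

variable {K : Type*} [Field K] {n : ℕ}

/-!
Since `f, g` is a regular sequence, `R/(f, g)` has Hilbert function `1, 3, 5, 6, 6, …`, so `I`
agrees with `(f, g)` below degree `j - 2` and has at most one new generator `h` in that degree.
Macaulay duality (the symmetry of the minimal free resolution of `I`) turns a minimal generator of
`I` in a degree `d + 1 > j - 2` into a nontrivial Koszul cocycle on `R/I` in degree `e = j - d ≤ 2`,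
that is, a minimal relation of `I` in degree `e + 2 ≤ 4`. In these degrees the relations only
involve `f` and `g`, and a regular sequence of degrees `2, 3` has no relation below the Koszul one
in degree `5`.
-/

theorem exists_sup_span_singleton_eq {V : Type*} [AddCommGroup V] [Module K V]
    {S T : Submodule K V} [FiniteDimensional K T] (hST : S ≤ T)
    (h : Module.finrank K T ≤ Module.finrank K S + 1) :
    ∃ v ∈ T, S ⊔ Submodule.span K {v} = T := by
  by_cases hTS : T ≤ S
  · exact ⟨0, T.zero_mem, by rw [Submodule.span_zero_singleton, sup_bot_eq, le_antisymm hST hTS]⟩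
  obtain ⟨v, hvT, hvS⟩ := SetLike.not_le_iff_exists.1 hTS
  have hle : S ⊔ Submodule.span K {v} ≤ T :=
    sup_le hST ((Submodule.span_singleton_le_iff_mem _ _).2 hvT)
  have : FiniteDimensional K (S ⊔ Submodule.span K {v} : Submodule K V) :=
    Submodule.finiteDimensional_of_le hle
  have hlt : S < S ⊔ Submodule.span K {v} :=
    left_lt_sup.2 (mt (Submodule.span_singleton_le_iff_mem _ _).1 hvS)
  have hfinrank := Submodule.finrank_lt_finrank_of_lt hlt
  exact ⟨v, hvT, Submodule.eq_of_le_of_finrank_le hle (by omega)⟩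

theorem homogeneousComponent_add_mul {σ R : Type*} [CommSemiring R] {p q : MvPolynomial σ R}
    {b : ℕ} (hq : q.IsHomogeneous b) (d : ℕ) :
    homogeneousComponent (d + b) (p * q) = homogeneousComponent d p * q := by
  let := gradedAlgebra (σ := σ) (R := R)
  have h := DirectSum.coe_decompose_mul_add_of_right_mem (homogeneousSubmodule σ R)
    (a := p) (i := d) hq
  simpa only [DirectSum.decompose, Equiv.coe_fn_mk, decomposition.decompose'_apply] using h

theorem homogeneousComponent_mul_of_lt {σ R : Type*} [CommSemiring R] {p q : MvPolynomial σ R}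
    {b d : ℕ} (hq : q.IsHomogeneous b) (hd : d < b) : homogeneousComponent d (p * q) = 0 := by
  let := gradedAlgebra (σ := σ) (R := R)
  exact (decomposition.decompose'_apply _ _).symm.trans <|
    DirectSum.coe_decompose_mul_of_right_mem_of_not_le (homogeneousSubmodule σ R)
      (a := p) (b := q) (n := d) (i := b) hq (not_le.2 hd)

theorem exists_homogeneousComponent_mul_eq {σ R : Type*} [CommSemiring R] {q : MvPolynomial σ R}
    {b : ℕ} (hq : q.IsHomogeneous b) (d : ℕ) (p : MvPolynomial σ R) :
    ∃ r, homogeneousComponent d (p * q) = r * q := by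
  rcases lt_or_ge d b with hd | hd
  · exact ⟨0, by rw [homogeneousComponent_mul_of_lt hq hd, zero_mul]⟩
  · obtain ⟨c, rfl⟩ := Nat.exists_eq_add_of_le' hd
    exact ⟨_, homogeneousComponent_add_mul hq c⟩

theorem homogeneousSubmodule_one_mul {σ R : Type*} [CommSemiring R] (d : ℕ) :
    homogeneousSubmodule σ R 1 * homogeneousSubmodule σ R d =
      homogeneousSubmodule σ R (d + 1) := by
  rw [← homogeneousSubmodule_one_pow R d, ← pow_succ', homogeneousSubmodule_one_pow]

theorem homogeneousSubmodule_one_mul_le {σ R : Type*} [CommSemiring R]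
    {M N : Submodule R (MvPolynomial σ R)} (h : ∀ v, ∀ q ∈ M, X v * q ∈ N) :
    homogeneousSubmodule σ R 1 * M ≤ N := by
  rw [homogeneousSubmodule_one_eq_span_X, ← Submodule.span_eq M, Submodule.span_mul_span,
    Submodule.span_le]
  rintro _ ⟨_, ⟨v, rfl⟩, q, hq, rfl⟩
  exact h v q hq

theorem finrank_homogeneousSubmodule {R : Type*} [CommRing R] [Nontrivial R] (n d : ℕ) :
    Module.finrank R (homogeneousSubmodule (Fin n) R d) = (n + d - 1).choose d := by
  have hS : {m : Fin n →₀ ℕ | m.degree = d} =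
      ((Finset.univ : Finset (Fin n)).finsuppAntidiag d : Set (Fin n →₀ ℕ)) := by
    ext m
    simp [Finsupp.degree_eq_sum]
  rw [homogeneousSubmodule_eq_finsupp_supported,
    (AddMonoidAlgebra.supportedEquivFinsupp (R := R) (S := R)
      {m : Fin n →₀ ℕ | m.degree = d}).finrank_eq, hS, Module.finrank_finsupp_self,
    ← Nat.card_eq_fintype_card, Nat.card_coe_set_eq, Set.ncard_coe_finset,
    Finset.card_finsuppAntidiag_nat_eq_choose, Finset.card_univ, Fintype.card_fin]

instance finiteDimensional_homogeneousSubmodule (d : ℕ) :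
    FiniteDimensional K (homogeneousSubmodule (Fin n) K d) :=
  Module.Finite.iff_fg.2 (homogeneousSubmodule_fg (Fin n) K d)

/-- The degree-`d` graded piece `I_d` of an ideal `I`, as a subspace of the polynomial ring. -/
def idealPiece (I : Ideal (MvPolynomial (Fin n) K)) (d : ℕ) :
    Submodule K (MvPolynomial (Fin n) K) :=
  I.restrictScalars K ⊓ homogeneousSubmodule (Fin n) K d

section IdealPiece

variable {I J : Ideal (MvPolynomial (Fin n) K)} {p : MvPolynomial (Fin n) K} {d : ℕ}

theorem mem_idealPiece : p ∈ idealPiece I d ↔ p ∈ I ∧ p.IsHomogeneous d :=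
  Iff.rfl

theorem idealPiece_mono (h : J ≤ I) (d : ℕ) : idealPiece J d ≤ idealPiece I d :=
  inf_le_inf_right _ h

instance finiteDimensional_idealPiece (I : Ideal (MvPolynomial (Fin n) K)) (d : ℕ) :
    FiniteDimensional K (idealPiece I d) :=
  Submodule.finiteDimensional_inf_right _ _

theorem hilbFn_add_finrank_idealPiece (I : Ideal (MvPolynomial (Fin n) K)) (d : ℕ) :
    hilbFn I d + Module.finrank K (idealPiece I d) =
      Module.finrank K (homogeneousSubmodule (Fin n) K d) := by
  let π := (Ideal.Quotient.mkₐ K I).toLinearMap.domRestrict (homogeneousSubmodule (Fin n) K d)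
  have hker : (LinearMap.ker π).map (homogeneousSubmodule (Fin n) K d).subtype =
      idealPiece I d := by
    ext p
    simp [π, mem_idealPiece, Ideal.Quotient.eq_zero_iff_mem, and_comm]
  rw [← hker, Submodule.finrank_map_subtype_eq, hilbFn, gradedPiece, ← LinearMap.range_domRestrict]
  exact π.finrank_range_add_finrank_ker

theorem idealPiece_eq_of_hilbFn_eq (hJI : J ≤ I) (h : hilbFn I d = hilbFn J d) :
    idealPiece J d = idealPiece I d := by
  have hI := hilbFn_add_finrank_idealPiece I d
  have hJ := hilbFn_add_finrank_idealPiece J d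
  exact Submodule.eq_of_le_of_finrank_eq (idealPiece_mono hJI d) (by omega)

theorem hilbFn_eq_zero_iff :
    hilbFn I d = 0 ↔ ∀ p : MvPolynomial (Fin n) K, p.IsHomogeneous d → p ∈ I := by
  have hI := hilbFn_add_finrank_idealPiece I d
  constructor
  · intro h p hp
    have htop : idealPiece I d = homogeneousSubmodule (Fin n) K d :=
      Submodule.eq_of_le_of_finrank_eq inf_le_right (by omega)
    exact (htop.ge hp).1
  · intro h
    have htop : idealPiece I d = homogeneousSubmodule (Fin n) K d :=
      inf_eq_right.2 h
    rw [htop] at hI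
    omega

theorem le_of_forall_idealPiece_le (hI : IsHomogIdeal I)
    (h : ∀ d, idealPiece I d ≤ J.restrictScalars K) : I ≤ J := by
  intro p hp
  rw [← sum_homogeneousComponent p]
  exact J.sum_mem fun d _ => h d ⟨hI p hp d, homogeneousComponent_isHomogeneous d p⟩

theorem le_of_forall_idealPiece_succ_le_mul (hI : IsHomogIdeal I) {c : ℕ}
    (hlow : ∀ d ≤ c, idealPiece I d ≤ J.restrictScalars K)
    (hgen : ∀ d, c ≤ d →
      idealPiece I (d + 1) ≤ homogeneousSubmodule (Fin n) K 1 * idealPiece I d) : I ≤ J := by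
  refine le_of_forall_idealPiece_le hI fun d => ?_
  rcases le_total d c with hd | hd
  · exact hlow d hd
  · induction d, hd using Nat.le_induction with
    | base => exact hlow c le_rfl
    | succ d hd ih =>
      exact (hgen d hd).trans
        (homogeneousSubmodule_one_mul_le fun v q hq => J.mul_mem_left (X v) (ih hq))

end IdealPiece

section RegularSequence

variable {J : Ideal (MvPolynomial (Fin n) K)} {f g : MvPolynomial (Fin n) K} {b : ℕ}

theorem isHomogIdeal_bot : IsHomogIdeal (⊥ : Ideal (MvPolynomial (Fin n) K)) := by
  rintro _ rfl i
  exact map_zero _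

theorem isHomogIdeal_span_singleton (hg : g.IsHomogeneous b) : IsHomogIdeal (Ideal.span {g}) := by
  intro p hp i
  obtain ⟨a, rfl⟩ := Ideal.mem_span_singleton'.1 hp
  obtain ⟨r, hr⟩ := exists_homogeneousComponent_mul_eq hg i a
  rw [hr]
  exact Ideal.mul_mem_left _ r (Ideal.mem_span_singleton_self g)

theorem idealPiece_sup_span_singleton_add (hJ : IsHomogIdeal J) (hg : g.IsHomogeneous b) (d : ℕ) :
    idealPiece (J ⊔ Ideal.span {g}) (d + b) =
      idealPiece J (d + b) ⊔
        (homogeneousSubmodule (Fin n) K d).map (LinearMap.mulRight K g) := by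
  refine le_antisymm ?_ (sup_le (idealPiece_mono le_sup_left _) ?_)
  · rintro p ⟨hp, hpd⟩
    obtain ⟨r, hr, _, hs, rfl⟩ := Submodule.mem_sup.1 hp
    obtain ⟨a, rfl⟩ := Ideal.mem_span_singleton'.1 hs
    rw [← homogeneousComponent_eq_self hpd, map_add, homogeneousComponent_add_mul hg]
    exact Submodule.add_mem_sup
      ⟨hJ r hr _, homogeneousComponent_isHomogeneous _ _⟩
      (Submodule.mem_map_of_mem (homogeneousComponent_isHomogeneous d a))
  · rintro _ ⟨a, ha, rfl⟩
    exact ⟨Ideal.mem_sup_right (Ideal.mul_mem_left _ a (Ideal.mem_span_singleton_self g)),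
      IsHomogeneous.mul ha hg⟩

theorem idealPiece_sup_span_singleton_of_lt (hJ : IsHomogIdeal J) (hg : g.IsHomogeneous b)
    {d : ℕ} (hd : d < b) : idealPiece (J ⊔ Ideal.span {g}) d = idealPiece J d := by
  refine le_antisymm ?_ (idealPiece_mono le_sup_left d)
  rintro p ⟨hp, hpd⟩
  obtain ⟨r, hr, _, hs, rfl⟩ := Submodule.mem_sup.1 hp
  obtain ⟨a, rfl⟩ := Ideal.mem_span_singleton'.1 hs
  rw [← homogeneousComponent_eq_self hpd, map_add, homogeneousComponent_mul_of_lt hg hd, add_zero]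
  exact ⟨hJ r hr d, homogeneousComponent_isHomogeneous d r⟩

theorem idealPiece_inf_map_mulRight (hg : g.IsHomogeneous b)
    (hreg : ∀ p, g * p ∈ J → p ∈ J) (d : ℕ) :
    idealPiece J (d + b) ⊓ (homogeneousSubmodule (Fin n) K d).map (LinearMap.mulRight K g) =
      (idealPiece J d).map (LinearMap.mulRight K g) := by
  refine le_antisymm ?_ ?_
  · rintro _ ⟨⟨hJa, -⟩, a, ha, rfl⟩
    exact Submodule.mem_map_of_mem ⟨hreg a (mul_comm a g ▸ hJa), ha⟩
  · rintro _ ⟨a, ⟨hJa, ha⟩, rfl⟩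
    exact ⟨⟨J.mul_mem_right g hJa, IsHomogeneous.mul ha hg⟩, Submodule.mem_map_of_mem ha⟩

theorem hilbFn_sup_span_singleton_add (hJ : IsHomogIdeal J) (hg : g.IsHomogeneous b) (hg0 : g ≠ 0)
    (hreg : ∀ p, g * p ∈ J → p ∈ J) (d : ℕ) :
    hilbFn (J ⊔ Ideal.span {g}) (d + b) + hilbFn J d = hilbFn J (d + b) := by
  have hinj : Function.Injective (LinearMap.mulRight K g) := mul_left_injective₀ hg0
  have hdim := Submodule.finrank_sup_add_finrank_inf_eq (idealPiece J (d + b))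
    ((homogeneousSubmodule (Fin n) K d).map (LinearMap.mulRight K g))
  rw [← idealPiece_sup_span_singleton_add hJ hg, idealPiece_inf_map_mulRight hg hreg,
    ← (Submodule.equivMapOfInjective _ hinj _).finrank_eq,
    ← (Submodule.equivMapOfInjective _ hinj _).finrank_eq] at hdim
  have hsum := hilbFn_add_finrank_idealPiece (J ⊔ Ideal.span {g}) (d + b)
  have hJd := hilbFn_add_finrank_idealPiece J d
  have hJdb := hilbFn_add_finrank_idealPiece J (d + b)
  omega

theorem hilbFn_sup_span_singleton_of_lt (hJ : IsHomogIdeal J) (hg : g.IsHomogeneous b) {d : ℕ}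
    (hd : d < b) : hilbFn (J ⊔ Ideal.span {g}) d = hilbFn J d := by
  have hsum := hilbFn_add_finrank_idealPiece (J ⊔ Ideal.span {g}) d
  have hJd := hilbFn_add_finrank_idealPiece J d
  rw [idealPiece_sup_span_singleton_of_lt hJ hg hd] at hsum
  omega

theorem hilbFn_bot (d : ℕ) :
    hilbFn (⊥ : Ideal (MvPolynomial (Fin n) K)) d = (n + d - 1).choose d := by
  have h := hilbFn_add_finrank_idealPiece (⊥ : Ideal (MvPolynomial (Fin n) K)) d
  rwa [idealPiece, Submodule.restrictScalars_bot, bot_inf_eq, finrank_bot, add_zero,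
    finrank_homogeneousSubmodule] at h

theorem hilbFn_span_quadric {f : MvPolynomial (Fin 3) K} (hf : f.IsHomogeneous 2) (hf0 : f ≠ 0)
    (d : ℕ) : hilbFn (Ideal.span {f}) d = 2 * d + 1 := by
  have hchoose (d : ℕ) : (3 + d - 1).choose d = (d + 2).choose 2 := by
    rw [show 3 + d - 1 = d + 2 by omega, Nat.choose_symm_add]
  rw [← bot_sup_eq (Ideal.span {f})]
  rcases lt_or_ge d 2 with hd | hd
  · rw [hilbFn_sup_span_singleton_of_lt isHomogIdeal_bot hf hd, hilbFn_bot, hchoose]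
    interval_cases d <;> rfl
  · obtain ⟨m, rfl⟩ := Nat.exists_eq_add_of_le' hd
    have h := hilbFn_sup_span_singleton_add isHomogIdeal_bot hf hf0
      (fun p hp => (mul_eq_zero.1 hp).resolve_left hf0) m
    simp only [hilbFn_bot, hchoose, Nat.choose_succ_succ', zero_add, Nat.choose_zero_right,
      Nat.choose_one_right] at h
    omega

theorem hilbFn_span_quadric_cubic_of_lt {f g : MvPolynomial (Fin 3) K} (hf : f.IsHomogeneous 2)
    (hf0 : f ≠ 0) (hg : g.IsHomogeneous 3) {d : ℕ} (hd : d < 3) :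
    hilbFn (Ideal.span {f, g}) d = 2 * d + 1 := by
  rw [Ideal.span_insert, hilbFn_sup_span_singleton_of_lt (isHomogIdeal_span_singleton hf) hg hd,
    hilbFn_span_quadric hf hf0]

theorem hilbFn_span_quadric_cubic {f g : MvPolynomial (Fin 3) K} (hf : f.IsHomogeneous 2)
    (hf0 : f ≠ 0) (hg : g.IsHomogeneous 3) (hg0 : g ≠ 0)
    (hreg : ∀ p, g * p ∈ Ideal.span {f} → p ∈ Ideal.span {f}) {d : ℕ} (hd : 3 ≤ d) :
    hilbFn (Ideal.span {f, g}) d = 6 := by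
  obtain ⟨m, rfl⟩ := Nat.exists_eq_add_of_le' hd
  have h := hilbFn_sup_span_singleton_add (isHomogIdeal_span_singleton hf) hg hg0 hreg m
  rw [← Ideal.span_insert, hilbFn_span_quadric hf hf0, hilbFn_span_quadric hf hf0] at h
  omega

end RegularSequence

section Duality

variable {I : Ideal (MvPolynomial (Fin n) K)} {j : ℕ} {Φ : MvPolynomial (Fin n) K →ₗ[K] K}

/-- `Φ` is a Macaulay dual generator of `I` in degree `j`: a functional concentrated in degree `j`
such that `I` is the kernel of the pairing `(p, q) ↦ Φ (p * q)`. -/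
structure IsMacaulayDual (I : Ideal (MvPolynomial (Fin n) K)) (j : ℕ)
    (Φ : MvPolynomial (Fin n) K →ₗ[K] K) : Prop where
  map_homogeneousComponent : ∀ p, Φ (homogeneousComponent j p) = Φ p
  mem_iff : ∀ p, p ∈ I ↔ ∀ q, Φ (p * q) = 0

theorem mk_mem_socleSub_iff {p : MvPolynomial (Fin n) K} :
    Ideal.Quotient.mk I p ∈ socleSub I ↔ ∀ v, X v * p ∈ I := by
  simp only [socleSub, Submodule.mem_iInf, LinearMap.mem_ker, LinearMap.mulLeft_apply,
    ← map_mul, Ideal.Quotient.eq_zero_iff_mem]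

theorem exists_mul_notMem_mk_mem_socleSub (hvan : ∀ i, j < i → hilbFn I i = 0)
    {p : MvPolynomial (Fin n) K} (hp : p ∉ I) :
    ∃ q, p * q ∉ I ∧ Ideal.Quotient.mk I (p * q) ∈ socleSub I := by
  let P (d : ℕ) : Prop := ∃ q : MvPolynomial (Fin n) K, q.IsHomogeneous d ∧ p * q ∉ I
  have hP0 : P 0 := ⟨1, isHomogeneous_one _ _, by rwa [mul_one]⟩
  have hPle (d : ℕ) (hd : P d) : d ≤ j := by
    obtain ⟨q, hq, hpq⟩ := hd
    by_contra! hjd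
    exact hpq (I.mul_mem_left p (hilbFn_eq_zero_iff.1 (hvan d hjd) q hq))
  obtain ⟨q, hq, hpq⟩ : P (Nat.findGreatest P j) := Nat.findGreatest_spec (Nat.zero_le j) hP0
  refine ⟨q, hpq, mk_mem_socleSub_iff.2 fun v => ?_⟩
  by_contra hv
  have hsucc : P (Nat.findGreatest P j + 1) :=
    ⟨q * X v, hq.mul (isHomogeneous_X K v), by rwa [← mul_assoc, mul_comm]⟩
  exact (Nat.le_findGreatest (hPle _ hsucc) hsucc).not_gt (Nat.lt_succ_self _)

theorem exists_isMacaulayDual (hAG : IsAG I) (hj : hilbFn I j ≠ 0)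
    (hvan : ∀ i, j < i → hilbFn I i = 0) :
    ∃ Φ : MvPolynomial (Fin n) K →ₗ[K] K, IsMacaulayDual I j Φ := by
  obtain ⟨hhom, -, -, hsoc⟩ := hAG
  obtain ⟨s, hs, hsI⟩ : ∃ s : MvPolynomial (Fin n) K, s.IsHomogeneous j ∧ s ∉ I := by
    simpa only [Ne, hilbFn_eq_zero_iff, not_forall, exists_prop] using hj
  have hs0 : Ideal.Quotient.mk I s ≠ 0 := by rwa [Ne, Ideal.Quotient.eq_zero_iff_mem]
  have hs_soc : Ideal.Quotient.mk I s ∈ socleSub I := mk_mem_socleSub_iff.2 fun v =>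
    hilbFn_eq_zero_iff.1 (hvan (j + 1) j.lt_succ_self) _
      (mul_comm s (X v) ▸ hs.mul (isHomogeneous_X K v))
  obtain ⟨φ, hφ⟩ := Module.Projective.exists_dual_ne_zero K hs0
  let Φ := φ ∘ₗ (Ideal.Quotient.mkₐ K I).toLinearMap ∘ₗ homogeneousComponent j
  have hΦ (p) : Φ p = φ (Ideal.Quotient.mk I (homogeneousComponent j p)) := rfl
  have hΦI (p) (hp : p ∈ I) : Φ p = 0 := by
    rw [hΦ, Ideal.Quotient.eq_zero_iff_mem.2 (hhom p hp j), map_zero]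
  refine ⟨Φ, fun p => ?_, fun p => ⟨fun hp q => hΦI _ (I.mul_mem_right q hp), fun hp => ?_⟩⟩
  · rw [hΦ, hΦ, homogeneousComponent_eq_self (homogeneousComponent_isHomogeneous _ _)]
  · by_contra hpI
    obtain ⟨q, hpq, hpq_soc⟩ := exists_mul_notMem_mk_mem_socleSub hvan hpI
    obtain ⟨c, hc⟩ := (finrank_eq_one_iff_of_nonzero' (⟨_, hpq_soc⟩ : socleSub I)
      fun h =>
      hpq (Ideal.Quotient.eq_zero_iff_mem.1 (congrArg Subtype.val h))).1 hsoc ⟨_, hs_soc⟩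
    have hcs : c • (p * q) - s ∈ I :=
      Ideal.Quotient.eq.1 (congrArg Subtype.val hc)
    have hΦs : Φ s = 0 := by
      simpa only [map_sub, map_smul, hp q, smul_zero, zero_sub, neg_eq_zero] using hΦI _ hcs
    exact hφ (by rwa [hΦ, homogeneousComponent_eq_self hs] at hΦs)

namespace IsMacaulayDual

theorem exists_representing [FiniteDimensional K (MvPolynomial (Fin n) K ⧸ I)]
    (hΦ : IsMacaulayDual I j Φ) {L : MvPolynomial (Fin n) K →ₗ[K] K} (hL : ∀ p ∈ I, L p = 0) :
    ∃ a, ∀ q, L q = Φ (a * q) := by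
  let B := (LinearMap.mul K (MvPolynomial (Fin n) K)).compr₂ Φ
  let W := I.restrictScalars K
  have hker : LinearMap.ker B = W := by
    ext p
    exact LinearMap.ext_iff.trans (hΦ.mem_iff p).symm
  have hW : FiniteDimensional K (MvPolynomial (Fin n) K ⧸ W) :=
    inferInstanceAs (FiniteDimensional K (MvPolynomial (Fin n) K ⧸ I))
  have : FiniteDimensional K W.dualAnnihilator :=
    W.dualQuotEquivDualAnnihilator.finiteDimensional
  have hle : LinearMap.range B ≤ W.dualAnnihilator := by
    rintro _ ⟨a, rfl⟩
    rw [Submodule.mem_dualAnnihilator]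
    intro p hp
    exact (congrArg Φ (mul_comm a p)).trans ((hΦ.mem_iff p).1 hp a)
  have hrange : LinearMap.range B = W.dualAnnihilator := by
    refine Submodule.eq_of_le_of_finrank_eq hle ?_
    rw [← B.quotKerEquivRange.finrank_eq, hker, ← W.dualQuotEquivDualAnnihilator.finrank_eq,
      Subspace.dual_finrank_eq]
  obtain ⟨a, ha⟩ : L ∈ LinearMap.range B := by
    rw [hrange, Submodule.mem_dualAnnihilator]
    exact hL
  exact ⟨a, fun q => (LinearMap.congr_fun ha q).symm⟩

theorem exists_isHomogeneous_representing [FiniteDimensional K (MvPolynomial (Fin n) K ⧸ I)]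
    (hΦ : IsMacaulayDual I j Φ) {d e : ℕ} (hde : d + e = j)
    {L : MvPolynomial (Fin n) K →ₗ[K] K} (hL : ∀ p ∈ I, L p = 0)
    (hLd : ∀ p, L (homogeneousComponent d p) = L p) :
    ∃ a : MvPolynomial (Fin n) K, a.IsHomogeneous e ∧ ∀ q, L q = Φ (a * q) := by
  obtain ⟨a, ha⟩ := hΦ.exists_representing hL
  refine ⟨homogeneousComponent e a, homogeneousComponent_isHomogeneous e a, fun q => ?_⟩
  calc L q = Φ (a * homogeneousComponent d q) := by rw [← hLd, ha]
    _ = Φ (homogeneousComponent e a * homogeneousComponent d q) := by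
      rw [← hΦ.map_homogeneousComponent, ← hde, add_comm d e,
        homogeneousComponent_add_mul (homogeneousComponent_isHomogeneous d q)]
    _ = Φ (homogeneousComponent e a * q) := by
      rw [← hΦ.map_homogeneousComponent (_ * q), ← hde, mul_comm _ q,
        homogeneousComponent_add_mul (homogeneousComponent_isHomogeneous e a), mul_comm]

end IsMacaulayDual

/-- Exactness of the Koszul complex of the variables on `R/I` at the degree-`e` part of `R^n`,
in cohomological form: a family `a` of `e`-forms with `x_w a_v ≡ x_v a_w` modulo `I` is congruent
to a multiple of the vector of variables. -/
def KoszulExact (I : Ideal (MvPolynomial (Fin n) K)) (e : ℕ) : Prop :=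
  ∀ a : Fin n → MvPolynomial (Fin n) K, (∀ v, (a v).IsHomogeneous e) →
    (∀ v w, X w * a v - X v * a w ∈ I) → ∃ b, ∀ v, a v - X v * b ∈ I

theorem KoszulExact.mono {J : Ideal (MvPolynomial (Fin n) K)} {e : ℕ} (h : KoszulExact J e)
    (hJI : J ≤ I) (hIJ : idealPiece I (e + 1) ≤ J.restrictScalars K) : KoszulExact I e := by
  intro c hc hcI
  have hcJ (v w) : X w * c v - X v * c w ∈ J := by
    refine hIJ ⟨hcI v w, ?_⟩
    rw [add_comm e]
    exact ((isHomogeneous_X K w).mul (hc v)).sub ((isHomogeneous_X K v).mul (hc w))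
  obtain ⟨b, hb⟩ := h c hc hcJ
  exact ⟨b, fun v => hJI (hb v)⟩

/- A functional killing `R_1 I_{d+1}` has contractions by the variables that kill `I_{d+1}`, so they
are represented by `e`-forms; these satisfy the cocycle condition, and writing them as a coboundary
shows that the functional kills all of `I_{d+2}`. -/
theorem idealPiece_le_mul_of_koszulExact [FiniteDimensional K (MvPolynomial (Fin n) K ⧸ I)]
    (hI : IsHomogIdeal I) (hΦ : IsMacaulayDual I j Φ) {d e : ℕ} (hde : d + 1 + e = j)
    (hexact : KoszulExact I e) :
    idealPiece I (d + 2) ≤ homogeneousSubmodule (Fin n) K 1 * idealPiece I (d + 1) := by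
  intro p hp
  by_contra hpmul
  obtain ⟨L, hLp, hL⟩ := Submodule.exists_dual_map_eq_bot_of_notMem hpmul inferInstance
  have hLX (v) (q) (hq : q ∈ idealPiece I (d + 1)) : L (X v * q) = 0 :=
    (LinearMap.le_ker_iff_map.2 hL) (Submodule.mul_mem_mul (isHomogeneous_X K v) hq)
  have hrep (v : Fin n) : ∃ a : MvPolynomial (Fin n) K, a.IsHomogeneous e ∧
      ∀ q, L (X v * homogeneousComponent (d + 1) q) = Φ (a * q) :=
    hΦ.exists_isHomogeneous_representing hde
      (L := L ∘ₗ LinearMap.mulLeft K (X v) ∘ₗ homogeneousComponent (d + 1))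
      (fun q hq => hLX v _ ⟨hI q hq _, homogeneousComponent_isHomogeneous _ _⟩)
      fun q => by
        simp [homogeneousComponent_eq_self (homogeneousComponent_isHomogeneous (d + 1) q)]
  choose a ha haL using hrep
  have hswap (v w) (q) :
      Φ (X w * a v * q) = L (X v * X w * homogeneousComponent d q) := by
    rw [mul_comm (X w), mul_assoc, ← haL, mul_comm (X w) q,
      homogeneousComponent_add_mul (isHomogeneous_X K w), mul_comm _ (X w), mul_assoc]
  obtain ⟨b, hb⟩ := hexact a ha fun v w => (hΦ.mem_iff _).2 fun q => by
    rw [sub_mul, map_sub, hswap, hswap, mul_comm (X v), sub_self]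
  have hLb : homogeneousSubmodule (Fin n) K (d + 2) ≤
      LinearMap.eqLocus L (Φ ∘ₗ LinearMap.mulRight K b) := by
    rw [← homogeneousSubmodule_one_mul]
    refine homogeneousSubmodule_one_mul_le fun v q hq => ?_
    have hab := (hΦ.mem_iff _).1 (hb v) q
    rw [sub_mul, map_sub, sub_eq_zero, ← haL, homogeneousComponent_eq_self hq,
      mul_right_comm] at hab
    exact hab
  exact hLp ((hLb hp.2).trans ((hΦ.mem_iff p).1 hp.1 b))

end Duality

section Koszul

open Matrix

theorem mem_span_X_image_of_X_mul_mem {σ R : Type*} [CommSemiring R] {s : Set σ} {i : σ}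
    (hi : i ∉ s) {p : MvPolynomial σ R} (h : X i * p ∈ Ideal.span (X '' s)) :
    p ∈ Ideal.span (X '' s) := by
  rw [mem_ideal_span_X_image] at h ⊢
  intro m hm
  obtain ⟨k, hk, hmk⟩ := h (Finsupp.single i 1 + m)
    (by rwa [mem_support_iff, coeff_X_mul, ← mem_support_iff])
  have hik : i ≠ k := fun hik => hi (hik ▸ hk)
  exact ⟨k, hk, by simpa [Finsupp.single_eq_of_ne' hik] using hmk⟩

theorem X_dvd_of_X_dvd_X_mul {σ R : Type*} [CommSemiring R] {i k : σ} (hik : i ≠ k)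
    {p : MvPolynomial σ R} (h : X k ∣ X i * p) : X k ∣ p := by
  rw [← Ideal.mem_span_singleton, ← Set.image_singleton] at h ⊢
  exact mem_span_X_image_of_X_mul_mem (s := {k}) hik h

variable {R : Type*} [CommRing R]

theorem exists_smul_X_eq_of_X_cross_eq_zero {a : Fin 3 → MvPolynomial (Fin 3) R}
    (ha : X ⨯₃ a = 0) : ∃ b : MvPolynomial (Fin 3) R, b • X = a := by
  rw [cross_apply] at ha
  have h1 : X 0 * a 1 - X 1 * a 0 = 0 := congrFun ha 2
  have h2 : X 2 * a 0 - X 0 * a 2 = 0 := congrFun ha 1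
  obtain ⟨b, hb⟩ : X 0 ∣ a 0 :=
    X_dvd_of_X_dvd_X_mul (i := 1) (by decide) ⟨a 1, by linear_combination -h1⟩
  have hX : IsLeftRegular (X 0 : MvPolynomial (Fin 3) R) := isRegular_X.left
  refine ⟨b, funext fun v => ?_⟩
  fin_cases v
  · exact (mul_comm _ _).trans hb.symm
  · exact hX (show X 0 * (b * X 1) = X 0 * a 1 by linear_combination -h1 - X 1 * hb)
  · exact hX (show X 0 * (b * X 2) = X 0 * a 2 by linear_combination h2 - X 2 * hb)

theorem exists_X_cross_eq_of_X_dotProduct_eq_zero {t : Fin 3 → MvPolynomial (Fin 3) R}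
    (ht : X ⬝ᵥ t = 0) : ∃ w, X ⨯₃ w = t := by
  rw [vec3_dotProduct] at ht
  have ht2 : t 2 ∈ Ideal.span (X '' {0, 1}) := by
    refine mem_span_X_image_of_X_mul_mem (i := 2) (by decide) ?_
    rw [Set.image_pair, Ideal.mem_span_pair]
    exact ⟨-t 0, -t 1, by linear_combination -ht⟩
  rw [Set.image_pair, Ideal.mem_span_pair] at ht2
  obtain ⟨p, q, hpq⟩ := ht2
  obtain ⟨r, hr⟩ : X 0 ∣ t 1 + X 2 * q :=
    X_dvd_of_X_dvd_X_mul (i := 1) (by decide)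
      ⟨-(t 0 + X 2 * p), by linear_combination ht + X 2 * hpq⟩
  have hX : IsLeftRegular (X 0 : MvPolynomial (Fin 3) R) := isRegular_X.left
  refine ⟨![-q, p, -r], funext fun v => ?_⟩
  fin_cases v
  · refine hX (show X 0 * (X 1 * -r - X 2 * p) = X 0 * t 0 from ?_)
    linear_combination X 1 * hr - ht - X 2 * hpq
  · exact show X 2 * -q - X 0 * -r = t 1 by linear_combination -hr
  · exact show X 0 * p - X 1 * -q = t 2 by linear_combination hpq

end Koszul

section Syzygy

variable {f g : MvPolynomial (Fin n) K} {a b d : ℕ}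

theorem exists_mul_add_mul_eq_of_mem_span_pair (hf : f.IsHomogeneous a) (hg : g.IsHomogeneous b)
    {p : MvPolynomial (Fin n) K} (hp : p.IsHomogeneous d) (hpfg : p ∈ Ideal.span {f, g}) :
    ∃ u t, u * f + t * g = p ∧ (t * g).IsHomogeneous d := by
  obtain ⟨q, r, hqr⟩ := Ideal.mem_span_pair.1 hpfg
  obtain ⟨u, hu⟩ := exists_homogeneousComponent_mul_eq hf d q
  obtain ⟨t, ht⟩ := exists_homogeneousComponent_mul_eq hg d r
  refine ⟨u, t, ?_, ht ▸ homogeneousComponent_isHomogeneous d _⟩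
  rw [← hu, ← ht, ← map_add, hqr, homogeneousComponent_eq_self hp]

theorem eq_zero_of_mul_add_mul_eq_zero (hf : f.IsHomogeneous a) (hg : g.IsHomogeneous b)
    (hf0 : f ≠ 0) (hg0 : g ≠ 0) (hreg : ∀ p, g * p ∈ Ideal.span {f} → p ∈ Ideal.span {f})
    {u t : MvPolynomial (Fin n) K} (ht : (t * g).IsHomogeneous d) (hd : d < a + b)
    (h : u * f + t * g = 0) : u = 0 ∧ t = 0 := by
  obtain ⟨k, rfl⟩ : ∃ k, k * f = t := Ideal.mem_span_singleton'.1 <|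
    hreg t <| Ideal.mem_span_singleton'.2 ⟨-u, by linear_combination -h⟩
  have htg : k * f * g = 0 := by
    rw [← homogeneousComponent_eq_self ht, mul_assoc, homogeneousComponent_mul_of_lt (hf.mul hg) hd]
  have ht0 : k * f = 0 := (mul_eq_zero.1 htg).resolve_right hg0
  refine ⟨(mul_eq_zero.1 ?_).resolve_right hf0, ht0⟩
  rwa [htg, add_zero] at h

end Syzygy

section CompleteIntersection

open Matrix

variable {f g : MvPolynomial (Fin 3) K} {a b : ℕ}

/- Writing `X ⨯₃ c = f • u + g • t`, the relation `X ⬝ᵥ (X ⨯₃ c) = 0` is a syzygy of `f, g` below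
the degree of the Koszul one, so `u` and `t` are themselves Koszul cycles. -/
theorem koszulExact_span_pair (hf : f.IsHomogeneous a) (hg : g.IsHomogeneous b) (hf0 : f ≠ 0)
    (hg0 : g ≠ 0) (hreg : ∀ p, g * p ∈ Ideal.span {f} → p ∈ Ideal.span {f}) {e : ℕ}
    (he : e + 2 < a + b) : KoszulExact (Ideal.span {f, g}) e := by
  intro c hc hcI
  have hcross (v) : ((X ⨯₃ c) v).IsHomogeneous (1 + e) ∧ (X ⨯₃ c) v ∈ Ideal.span {f, g} := by
    have hXc (v w) := (isHomogeneous_X K v).mul (hc w)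
    rw [cross_apply]
    fin_cases v
    · exact ⟨(hXc 1 2).sub (hXc 2 1), hcI 2 1⟩
    · exact ⟨(hXc 2 0).sub (hXc 0 2), hcI 0 2⟩
    · exact ⟨(hXc 0 1).sub (hXc 1 0), hcI 1 0⟩
  choose u t hut htg using fun v =>
    exists_mul_add_mul_eq_of_mem_span_pair hf hg (hcross v).1 (hcross v).2
  have hdot : (X ⬝ᵥ u) * f + (X ⬝ᵥ t) * g = 0 := by
    have hself := dot_self_cross X c
    rw [vec3_dotProduct, ← hut, ← hut, ← hut] at hself
    rw [vec3_dotProduct, vec3_dotProduct]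
    linear_combination hself
  have hdeg : ((X ⬝ᵥ t) * g).IsHomogeneous (1 + (1 + e)) := by
    rw [dotProduct, Finset.sum_mul]
    refine IsHomogeneous.sum _ _ _ fun v _ => ?_
    rw [mul_assoc]
    exact (isHomogeneous_X K v).mul (htg v)
  obtain ⟨hu, ht⟩ :=
    eq_zero_of_mul_add_mul_eq_zero hf hg hf0 hg0 hreg hdeg (by omega) hdot
  obtain ⟨u, rfl⟩ := exists_X_cross_eq_of_X_dotProduct_eq_zero hu
  obtain ⟨t, rfl⟩ := exists_X_cross_eq_of_X_dotProduct_eq_zero ht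
  have hcut : X ⨯₃ (c - f • u - g • t) = 0 := by
    ext1 v
    simp only [map_sub, map_smul, Pi.sub_apply, Pi.smul_apply, smul_eq_mul, Pi.zero_apply]
    linear_combination -hut v
  obtain ⟨q, hq⟩ := exists_smul_X_eq_of_X_cross_eq_zero hcut
  refine ⟨q, fun v => Ideal.mem_span_pair.2 ⟨u v, t v, ?_⟩⟩
  have hqv : q * X v = c v - f * u v - g * t v := congrFun hq v
  linear_combination hqv

variable {I : Ideal (MvPolynomial (Fin 3) K)} {j c : ℕ}

theorem idealPiece_succ_le_mul_of_hilbFn_eq (hAG : IsAG I) (hj : hilbFn I j ≠ 0)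
    (hvan : ∀ i, j < i → hilbFn I i = 0) (hf : f.IsHomogeneous a) (hg : g.IsHomogeneous b)
    (hf0 : f ≠ 0) (hg0 : g ≠ 0) (hreg : ∀ p, g * p ∈ Ideal.span {f} → p ∈ Ideal.span {f})
    (hle : Ideal.span {f, g} ≤ I) (habc : a + b + c = j + 3) (hab : a + b ≤ c + 1)
    (hlow : ∀ d < c, hilbFn I d = hilbFn (Ideal.span {f, g}) d) {d : ℕ} (hd : c ≤ d) :
    idealPiece I (d + 1) ≤ homogeneousSubmodule (Fin 3) K 1 * idealPiece I d := by
  rcases lt_or_ge j d with hjd | hdj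
  · have hId : idealPiece I d = homogeneousSubmodule (Fin 3) K d :=
      inf_eq_right.2 (hilbFn_eq_zero_iff.1 (hvan d hjd))
    rw [hId, homogeneousSubmodule_one_mul]
    exact inf_le_right
  · obtain ⟨e, rfl⟩ := Nat.exists_eq_add_of_le hdj
    obtain ⟨d, rfl⟩ := Nat.exists_eq_add_of_le' (show 1 ≤ d by omega)
    have := hAG.2.2.1
    obtain ⟨Φ, hΦ⟩ := exists_isMacaulayDual hAG hj hvan
    refine idealPiece_le_mul_of_koszulExact hAG.1 hΦ rfl ?_
    refine (koszulExact_span_pair hf hg hf0 hg0 hreg (by omega)).mono hle ?_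
    rw [← idealPiece_eq_of_hilbFn_eq hle (hlow (e + 1) (by omega))]
    exact inf_le_left

theorem exists_eq_span_triple (hAG : IsAG I) (hj : hilbFn I j ≠ 0)
    (hvan : ∀ i, j < i → hilbFn I i = 0) (hf : f.IsHomogeneous a) (hg : g.IsHomogeneous b)
    (hf0 : f ≠ 0) (hg0 : g ≠ 0) (hreg : ∀ p, g * p ∈ Ideal.span {f} → p ∈ Ideal.span {f})
    (hle : Ideal.span {f, g} ≤ I) (habc : a + b + c = j + 3) (hab : a + b ≤ c + 1)
    (hlow : ∀ d < c, hilbFn I d = hilbFn (Ideal.span {f, g}) d)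
    (hc : hilbFn (Ideal.span {f, g}) c ≤ hilbFn I c + 1) :
    ∃ h : MvPolynomial (Fin 3) K, h.IsHomogeneous c ∧ I = Ideal.span {f, g, h} := by
  have hIc := hilbFn_add_finrank_idealPiece I c
  have hfgc := hilbFn_add_finrank_idealPiece (Ideal.span {f, g}) c
  obtain ⟨h, ⟨hhI, hh⟩, hsup⟩ :=
    exists_sup_span_singleton_eq (idealPiece_mono hle c) (by omega)
  have hspan : Ideal.span {f, g, h} = Ideal.span {f, g} ⊔ Ideal.span {h} := by
    rw [Ideal.span_insert, Ideal.span_insert g, Ideal.span_insert f, sup_assoc]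
  refine ⟨h, hh, le_antisymm ?_ ?_⟩
  · have hfgh (d : ℕ) : idealPiece (Ideal.span {f, g}) d ≤
        (Ideal.span {f, g, h}).restrictScalars K :=
      fun p hp => hspan.ge (Ideal.mem_sup_left hp.1)
    refine le_of_forall_idealPiece_succ_le_mul hAG.1 (fun d hd => ?_) fun d hd =>
      idealPiece_succ_le_mul_of_hilbFn_eq hAG hj hvan hf hg hf0 hg0 hreg hle habc hab hlow hd
    rcases hd.lt_or_eq with hd | rfl
    · rw [← idealPiece_eq_of_hilbFn_eq hle (hlow d hd)]
      exact hfgh d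
    · rw [← hsup]
      exact sup_le (hfgh d)
        ((Submodule.span_singleton_le_iff_mem _ _).2 (Ideal.subset_span (by simp)))
  · rw [hspan]
    exact sup_le hle ((Ideal.span_singleton_le_iff_mem I).2 hhI)

end CompleteIntersection

/-- let `A = k[x,y,z]/I` be Artinian Gorenstein of socle degree
`j ≥ 6` with Hilbert function `(1,3,5,6^{j-5},5,3,1)`, with `I_2 = ⟨f⟩`,
`I_3 = ⟨xf, yf, zf, g⟩`, and suppose `f, g` is a regular sequence. Then `I` is a
complete intersection `I = (f, g, h)` with `deg h = j - 2`. -/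
theorem stmt12 (I : Ideal (MvPolynomial (Fin 3) K)) (j : ℕ) (hj : 6 ≤ j)
    (hAG : IsAG I) (hsoc : socDeg I = j)
    (h0 : hilbFn I 0 = 1) (h1 : hilbFn I 1 = 3) (h2 : hilbFn I 2 = 5)
    (hmid : ∀ i, 3 ≤ i → i ≤ j - 3 → hilbFn I i = 6)
    (h3 : hilbFn I (j - 2) = 5) (h4 : hilbFn I (j - 1) = 3) (h5 : hilbFn I j = 1)
    (hvan : ∀ i, j < i → hilbFn I i = 0)
    (f g : MvPolynomial (Fin 3) K) (hf : f.IsHomogeneous 2) (hg : g.IsHomogeneous 3)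
    (hI2 : Submodule.restrictScalars K I ⊓ homogeneousSubmodule (Fin 3) K 2 =
      Submodule.span K {f})
    (hI3 : Submodule.restrictScalars K I ⊓ homogeneousSubmodule (Fin 3) K 3 =
      Submodule.span K {X 0 * f, X 1 * f, X 2 * f, g})
    (hf0 : f ≠ 0)
    (hreg : ∀ p, g * p ∈ Ideal.span {f} → p ∈ Ideal.span {f}) :
    ∃ h : MvPolynomial (Fin 3) K, h.IsHomogeneous (j - 2) ∧
      I = Ideal.span {f, g, h} := by
  have hfI : f ∈ I := (hI2.ge (Submodule.mem_span_singleton_self f)).1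
  have hgI : g ∈ I := (hI3.ge (Submodule.subset_span (by simp))).1
  have hle : Ideal.span {f, g} ≤ I := Ideal.span_le.2 (Set.pair_subset hfI hgI)
  have hg0 : g ≠ 0 := by
    rintro rfl
    have h1f : (1 : MvPolynomial (Fin 3) K) ∈ Ideal.span {f} :=
      hreg 1 (by rw [zero_mul]; exact Ideal.zero_mem _)
    exact hAG.2.1 ((Ideal.eq_top_iff_one I).2 ((Ideal.span_singleton_le_iff_mem I).2 hfI h1f))
  have hsmall {d : ℕ} (hd : d < 3) : hilbFn (Ideal.span {f, g}) d = 2 * d + 1 :=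
    hilbFn_span_quadric_cubic_of_lt hf hf0 hg hd
  have hlarge {d : ℕ} (hd : 3 ≤ d) : hilbFn (Ideal.span {f, g}) d = 6 :=
    hilbFn_span_quadric_cubic hf hf0 hg hg0 hreg hd
  refine exists_eq_span_triple hAG (by omega) hvan hf hg hf0 hg0 hreg hle (by omega) (by omega)
    (fun d hd => ?_) (by rw [hlarge (by omega), h3])
  rcases lt_or_ge d 3 with hd3 | hd3
  · rw [hsmall hd3]
    interval_cases d <;> assumption
  · rw [hlarge hd3, hmid d hd3 (by omega)]
end
end
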